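/- arXiv:cs/0609100 — 5 statements merged into one kernel-verified Lean document; each statement's English description precedes it below -/
import Mathlib

section
/- Let N ≥ 1, let X = Fin N → ℝ with inner product ⟨u,v⟩ = Σᵢ uᵢvᵢ and norm ‖u‖, let J : X → ℝ be nonnegative, convex, lower semicontinuous, positively 1-homogeneous (J(t•u) = t·J(u) for all t ≥ 0), and satisfy the generalized co-area formula J(u) = ∫_ℝ J(χ_{u>t}) dt for all u ∈ X, where χ_{u>t} ∈ X is the indicator function (χ_{u>t})ᵢ = 1 if uᵢ > t and 0 otherwise. Let λ > 0, f ∈ X, and suppose w ∈ X minimizes u ↦ J(u) + (1/(2λ))‖u − f‖² over X. Then for every s ∈ ℝ, the binary function θ = χ_{w>s} minimizes θ ↦ λ·J(θ) + Σᵢ (s − fᵢ)θᵢ over all θ ∈ X with θᵢ ∈ {0,1} for all i. -/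
open MeasureTheory

open Filter Set
open scoped Matrix Topology

/-
Put `p = (f - w) / λ`. Optimality of `w` says that `p` is a subgradient of `J` at `w`, i.e. that
`w` minimizes `K u = J u - ⟨p, u⟩`. Functionals obeying the co-area formula do not change when a
constant is added to their argument, which forces `∑ i, p i = 0`; linear functionals with this
property obey the co-area formula too, and hence so does `K`. Then `K` is positively homogeneous,
so its minimum is `K w = 0`, and the co-area formula writes it as an integral of the nonnegative
numbers `K (χ_{w > t})`, which therefore vanish. Finally
`λ J θ + ∑ i, (s - f i) θ i = λ K θ + ∑ i, (s - w i) θ i`,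
and `χ_{w > s}` minimizes both summands over `[0, 1]`-valued `θ`.
-/

theorem neg_lineDeriv_le_sub_of_isMinOn_add {E : Type*} [AddCommGroup E] [Module ℝ E]
    {S : Set E} {J g : E → ℝ} {g' : ℝ} {w u : E} (hJ : ConvexOn ℝ S J) (hwS : w ∈ S) (huS : u ∈ S)
    (hw : IsMinOn (fun v => J v + g v) S w) (hg : HasLineDerivAt ℝ g g' w (u - w)) :
    -g' ≤ J u - J w := by
  let φ : ℝ → ℝ := fun τ => τ * (J u - J w) + g (w + τ • (u - w))
  have hφ_deriv : HasDerivAt φ (J u - J w + g') 0 := by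
    have hlinear := (hasDerivAt_id (0 : ℝ)).mul_const (J u - J w)
    rw [one_mul] at hlinear
    exact hlinear.fun_add hg
  have hφ_min : IsMinOn φ (Icc 0 1) 0 := by
    rintro τ ⟨hτ₀, hτ₁⟩
    have hsegment : w + τ • (u - w) = (1 - τ) • w + τ • u := by module
    have hconv := hJ.2 hwS huS (sub_nonneg.2 hτ₁) hτ₀ (sub_add_cancel 1 τ)
    have hmin := hw (hJ.1 hwS huS (sub_nonneg.2 hτ₁) hτ₀ (sub_add_cancel 1 τ))
    simp only [mem_ofPred_eq, smul_eq_mul] at hconv hmin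
    simp only [φ, mem_ofPred_eq, zero_mul, zero_smul, add_zero, zero_add, hsegment]
    linarith
  have hcone : (1 : ℝ) ∈ posTangentConeAt (Icc (0 : ℝ) 1) 0 :=
    mem_posTangentConeAt_of_segment_subset (by rw [zero_add, segment_eq_Icc zero_le_one])
  have hnonneg := hφ_min.localize.hasFDerivWithinAt_nonneg
    hφ_deriv.hasDerivWithinAt.hasFDerivWithinAt hcone
  simp only [ContinuousLinearMap.toSpanSingleton_apply, one_smul] at hnonneg
  linarith

theorem indicator_Iio_sub_indicator_Iio (a b t : ℝ) :
    (Iio a).indicator (1 : ℝ → ℝ) t - (Iio b).indicator 1 t =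
      (Ico b a).indicator 1 t - (Ico a b).indicator 1 t := by
  simp only [indicator_apply, mem_Iio, mem_Ico, Pi.one_apply]
  grind

theorem integrable_indicator_Ico_one (a b : ℝ) : Integrable ((Ico a b).indicator (1 : ℝ → ℝ)) :=
  (integrable_indicator_iff measurableSet_Ico).2 (integrableOn_const (by simp))

theorem integrable_indicator_Iio_sub_indicator_Iio (a b : ℝ) :
    Integrable fun t => (Iio a).indicator (1 : ℝ → ℝ) t - (Iio b).indicator 1 t := by
  simp only [indicator_Iio_sub_indicator_Iio]
  exact (integrable_indicator_Ico_one b a).sub (integrable_indicator_Ico_one a b)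

theorem integral_indicator_Iio_sub_indicator_Iio (a b : ℝ) :
    ∫ t, ((Iio a).indicator (1 : ℝ → ℝ) t - (Iio b).indicator 1 t) = a - b := by
  simp only [indicator_Iio_sub_indicator_Iio]
  rw [integral_sub (integrable_indicator_Ico_one b a) (integrable_indicator_Ico_one a b),
    integral_indicator_one measurableSet_Ico, integral_indicator_one measurableSet_Ico,
    Real.volume_real_Ico, Real.volume_real_Ico, ← neg_sub a b, max_zero_sub_max_neg_zero_eq_self]

/-- The indicator function `χ_{u > t}` of the strict upper level set of `u` at level `t`, i.e. the
binary image obtained by thresholding `u`. -/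
noncomputable def levelIndicator {ι : Type*} (u : ι → ℝ) (t : ℝ) : ι → ℝ :=
  fun i => if u i > t then 1 else 0

section LevelIndicator

variable {ι : Type*}

theorem levelIndicator_of_forall_lt {u : ι → ℝ} {t : ℝ} (h : ∀ i, t < u i) :
    levelIndicator u t = 1 :=
  funext fun i => if_pos (h i)

theorem levelIndicator_of_forall_le {u : ι → ℝ} {t : ℝ} (h : ∀ i, u i ≤ t) :
    levelIndicator u t = 0 :=
  funext fun i => if_neg (h i).not_gt

theorem levelIndicator_add_const (u : ι → ℝ) (c t : ℝ) :
    levelIndicator (u + fun _ => c) t = levelIndicator u (t - c) := by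
  ext i
  simp only [levelIndicator, Pi.add_apply, gt_iff_lt, sub_lt_iff_lt_add]

theorem levelIndicator_smul {a : ℝ} (ha : 0 < a) (u : ι → ℝ) (t : ℝ) :
    levelIndicator (a • u) t = levelIndicator u (t / a) := by
  ext i
  simp only [levelIndicator, Pi.smul_apply, smul_eq_mul, gt_iff_lt, div_lt_iff₀' ha]

theorem levelIndicator_apply_eq_indicator_Iio (u : ι → ℝ) (i : ι) :
    (fun t => levelIndicator u t i) = (Iio (u i)).indicator 1 := by
  ext t
  simp only [levelIndicator, indicator_apply, mem_Iio, Pi.one_apply, gt_iff_lt]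

theorem measurable_levelIndicator (u : ι → ℝ) : Measurable (levelIndicator u) := by
  refine measurable_pi_lambda _ fun i => ?_
  rw [levelIndicator_apply_eq_indicator_Iio]
  exact measurable_one.indicator measurableSet_Iio

theorem sub_mul_levelIndicator_le (w : ι → ℝ) (s : ℝ) (i : ι) {x : ℝ} (hx : x ∈ Icc (0 : ℝ) 1) :
    (s - w i) * levelIndicator w s i ≤ (s - w i) * x := by
  unfold levelIndicator
  split_ifs with h
  · exact mul_le_mul_of_nonpos_left hx.2 (sub_nonpos.2 h.le)
  · rw [mul_zero]
    exact mul_nonneg (sub_nonneg.2 (not_lt.1 h)) hx.1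

variable [Finite ι]

theorem finite_range_levelIndicator (u : ι → ℝ) : (range (levelIndicator u)).Finite := by
  refine (Finite.pi' fun _ : ι => toFinite ({0, 1} : Set ℝ)).subset ?_
  rintro _ ⟨t, rfl⟩ i
  unfold levelIndicator
  split_ifs <;> simp

theorem eventually_nhdsGT_levelIndicator_eq (u : ι → ℝ) (s : ℝ) :
    ∀ᶠ t in 𝓝[>] s, levelIndicator u t = levelIndicator u s := by
  have hpixel : ∀ i, ∀ᶠ t in 𝓝[>] s, (u i > t ↔ u i > s) := by
    intro i
    rcases lt_or_ge s (u i) with hi | hi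
    · filter_upwards [nhdsWithin_le_nhds (Iio_mem_nhds hi)] with t ht
      exact iff_of_true ht hi
    · filter_upwards [self_mem_nhdsWithin] with t ht
      exact iff_of_false (hi.trans (mem_Ioi.1 ht).le).not_gt hi.not_gt
  filter_upwards [eventually_all.2 hpixel] with t ht
  ext i
  simp only [levelIndicator, ht i]

/-- The integrand takes finitely many values, and it is `J 1` or `J 0` outside a bounded set. -/
theorem integrable_comp_levelIndicator {J : (ι → ℝ) → ℝ} (h0 : J 0 = 0) (h1 : J 1 = 0)
    (u : ι → ℝ) : Integrable fun t => J (levelIndicator u t) := by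
  let S : SimpleFunc ℝ (ι → ℝ) :=
    ⟨levelIndicator u, fun θ => measurable_levelIndicator u (measurableSet_singleton θ),
      finite_range_levelIndicator u⟩
  obtain ⟨a, ha⟩ := (finite_range u).bddBelow
  obtain ⟨b, hb⟩ := (finite_range u).bddAbove
  refine (SimpleFunc.integrable_iff (f := S.map J)).2 fun y hy => ?_
  refine (measure_mono fun t ht => ?_).trans_lt (measure_Icc_lt_top (a := a) (b := b))
  replace ht : J (levelIndicator u t) = y := ht
  constructor <;> by_contra! hlt <;> refine hy (ht.symm.trans ?_)
  · rwa [levelIndicator_of_forall_lt fun i => hlt.trans_le (ha (mem_range_self i))]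
  · rwa [levelIndicator_of_forall_le fun i => (hb (mem_range_self i)).trans hlt.le]

end LevelIndicator

/-- The generalized co-area formula, which recovers `J` from its values on level sets. The Bochner
integral gives a divergent integral the value `0`; for finite `ι` none occurs, by
`SatisfiesCoarea.integrable`. -/
def SatisfiesCoarea {ι : Type*} (J : (ι → ℝ) → ℝ) : Prop :=
  ∀ u : ι → ℝ, J u = ∫ t : ℝ, J (levelIndicator u t)

namespace SatisfiesCoarea

variable {ι : Type*} {J K : (ι → ℝ) → ℝ}

theorem map_const (hJ : SatisfiesCoarea J) (c : ℝ) : J (fun _ => c) = 0 := by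
  by_cases hint : Integrable fun t => J (levelIndicator (fun _ : ι => c) t)
  · -- a nonzero constant is not integrable on a half-line, so `J 1 = J 0 = 0`
    have hbelow : ∀ t < c, J (levelIndicator (fun _ : ι => c) t) = J 1 := fun t ht => by
      rw [levelIndicator_of_forall_lt fun _ => ht]
    have habove : ∀ t ≥ c, J (levelIndicator (fun _ : ι => c) t) = J 0 := fun t ht => by
      rw [levelIndicator_of_forall_le fun _ => ht]
    have h1 : J 1 = 0 := by
      have hconst : IntegrableOn (fun _ => J 1) (Iio c) :=
        hint.integrableOn.congr_fun hbelow measurableSet_Iio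
      simpa [integrableOn_const_iff] using hconst
    have h0 : J 0 = 0 := by
      have hconst : IntegrableOn (fun _ => J 0) (Ici c) :=
        hint.integrableOn.congr_fun habove measurableSet_Ici
      simpa [integrableOn_const_iff] using hconst
    rw [hJ, integral_eq_zero_of_ae]
    filter_upwards with t
    rcases lt_or_ge t c with ht | ht
    · exact (hbelow t ht).trans h1
    · exact (habove t ht).trans h0
  · -- a divergent integral has the value `0`
    rw [hJ, integral_undef hint]

theorem map_zero (hJ : SatisfiesCoarea J) : J 0 = 0 :=
  hJ.map_const 0

theorem map_one (hJ : SatisfiesCoarea J) : J 1 = 0 :=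
  hJ.map_const 1

theorem map_add_const (hJ : SatisfiesCoarea J) (u : ι → ℝ) (c : ℝ) :
    J (u + fun _ => c) = J u := by
  rw [hJ, hJ u]
  simp only [levelIndicator_add_const]
  exact integral_sub_right_eq_self (fun t => J (levelIndicator u t)) c

theorem map_smul (hJ : SatisfiesCoarea J) {a : ℝ} (ha : 0 < a) (u : ι → ℝ) :
    J (a • u) = a * J u := by
  rw [hJ, hJ u]
  simp only [levelIndicator_smul ha]
  rw [Measure.integral_comp_div (fun t => J (levelIndicator u t)), abs_of_pos ha, smul_eq_mul]

theorem map_eq_zero_of_isMinOn (hJ : SatisfiesCoarea J) {w : ι → ℝ} (hw : IsMinOn J univ w) :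
    J w = 0 := by
  have hle_zero : J w ≤ J 0 := hw (mem_univ _)
  have hle_two_smul : J w ≤ J ((2 : ℝ) • w) := hw (mem_univ _)
  rw [hJ.map_zero] at hle_zero
  rw [hJ.map_smul two_pos] at hle_two_smul
  linarith

theorem integrable [Finite ι] (hJ : SatisfiesCoarea J) (u : ι → ℝ) :
    Integrable fun t => J (levelIndicator u t) :=
  integrable_comp_levelIndicator hJ.map_zero hJ.map_one u

theorem sub [Finite ι] (hJ : SatisfiesCoarea J) (hK : SatisfiesCoarea K) :
    SatisfiesCoarea fun u => J u - K u := by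
  intro u
  rw [integral_sub (hJ.integrable u) (hK.integrable u), ← hJ u, ← hK u]

theorem map_levelIndicator_eq_zero [Finite ι] (hJ : SatisfiesCoarea J) (hnonneg : ∀ u, 0 ≤ J u)
    {w : ι → ℝ} (hw : J w = 0) (s : ℝ) : J (levelIndicator w s) = 0 := by
  have hae : ∀ᵐ t, J (levelIndicator w t) = 0 :=
    (integral_eq_zero_iff_of_nonneg (fun _ => hnonneg _) (hJ.integrable w)).1 ((hJ w).symm.trans hw)
  obtain ⟨r, hsr, hconst⟩ :=
    mem_nhdsGT_iff_exists_Ioo_subset.1 (eventually_nhdsGT_levelIndicator_eq w s)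
  obtain ⟨t, hzero, ht⟩ := (Measure.dense_of_ae hae).exists_between hsr
  have heq : levelIndicator w t = levelIndicator w s := hconst ht
  rw [← heq]
  exact hzero

theorem isMinOn_levelIndicator [Finite ι] (hJ : SatisfiesCoarea J) {w : ι → ℝ}
    (hw : IsMinOn J univ w) (s : ℝ) : IsMinOn J univ (levelIndicator w s) := by
  have hw0 := hJ.map_eq_zero_of_isMinOn hw
  have hnonneg : ∀ u, 0 ≤ J u := fun u => hw0.ge.trans (hw (mem_univ u))
  refine isMinOn_univ_iff.2 fun u => ?_
  rw [hJ.map_levelIndicator_eq_zero hnonneg hw0]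
  exact hnonneg u

variable [Fintype ι] {p w : ι → ℝ}

theorem dotProduct_of_sum_eq_zero (hp : ∑ i, p i = 0) : SatisfiesCoarea fun u => p ⬝ᵥ u := by
  intro u
  -- subtracting `χ_{0 > t}` makes the summands integrable and, by `hp`, does not change the sum
  have hlevel : ∀ t, p ⬝ᵥ levelIndicator u t =
      ∑ i, p i * ((Iio (u i)).indicator (1 : ℝ → ℝ) t - (Iio 0).indicator 1 t) := by
    intro t
    simp only [mul_sub, Finset.sum_sub_distrib, ← Finset.sum_mul, hp, zero_mul, sub_zero,
      ← levelIndicator_apply_eq_indicator_Iio, dotProduct]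
  simp only [hlevel]
  rw [integral_finsetSum _ fun i _ =>
    (integrable_indicator_Iio_sub_indicator_Iio (u i) 0).const_mul (p i)]
  simp only [integral_const_mul, integral_indicator_Iio_sub_indicator_Iio, sub_zero, dotProduct]

theorem sum_eq_zero_of_isMinOn_sub_dotProduct (hJ : SatisfiesCoarea J)
    (hp : IsMinOn (fun u => J u - p ⬝ᵥ u) univ w) : ∑ i, p i = 0 := by
  have hshift : ∀ c : ℝ, (∑ i, p i) * c ≤ 0 := by
    intro c
    have hmin : J w - p ⬝ᵥ w ≤ J (w + fun _ => c) - p ⬝ᵥ (w + fun _ => c) := hp (mem_univ _)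
    have hconst : p ⬝ᵥ (fun _ => c) = (∑ i, p i) * c := (Finset.sum_mul ..).symm
    rw [hJ.map_add_const, dotProduct_add, hconst] at hmin
    linarith
  linarith [hshift 1, hshift (-1)]

theorem isMinOn_sub_dotProduct_levelIndicator (hJ : SatisfiesCoarea J)
    (hp : IsMinOn (fun u => J u - p ⬝ᵥ u) univ w) (s : ℝ) :
    IsMinOn (fun u => J u - p ⬝ᵥ u) univ (levelIndicator w s) :=
  have hlinear := dotProduct_of_sum_eq_zero (hJ.sum_eq_zero_of_isMinOn_sub_dotProduct hp)
  (hJ.sub hlinear).isMinOn_levelIndicator hp s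

end SatisfiesCoarea

section ROF

variable {ι : Type*} [Fintype ι] {J : (ι → ℝ) → ℝ} {lam : ℝ} {f w : ι → ℝ}

theorem hasLineDerivAt_const_mul_sum_sq_sub (c : ℝ) (f w v : ι → ℝ) :
    HasLineDerivAt ℝ (fun u => c * ∑ i, (u i - f i) ^ 2) (2 * c * ((w - f) ⬝ᵥ v)) w v := by
  have hpixel : ∀ i, HasDerivAt (fun τ : ℝ => ((w + τ • v) i - f i) ^ 2)
      (2 * ((w i - f i) * v i)) 0 := by
    intro i
    have hlinear : HasDerivAt (fun τ : ℝ => (w + τ • v) i - f i) (v i) 0 := by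
      simpa using (((hasDerivAt_id' (0 : ℝ)).mul_const (v i)).const_add (w i)).sub_const (f i)
    simpa [mul_assoc] using hlinear.fun_pow 2
  convert (HasDerivAt.fun_sum fun i _ => hpixel i).const_mul c using 1
  rw [← Finset.mul_sum, ← mul_assoc, mul_comm c]
  rfl

theorem isMinOn_sub_dotProduct_of_isMinOn_add_sum_sq (hJ : ConvexOn ℝ univ J)
    (hw : IsMinOn (fun u => J u + 1 / (2 * lam) * ∑ i, (u i - f i) ^ 2) univ w) :
    IsMinOn (fun u => J u - (lam⁻¹ • (f - w)) ⬝ᵥ u) univ w := by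
  refine isMinOn_univ_iff.2 fun u => ?_
  have hsub := neg_lineDeriv_le_sub_of_isMinOn_add hJ (mem_univ w) (mem_univ u) hw
    (hasLineDerivAt_const_mul_sum_sq_sub _ f w (u - w))
  have hcoeff : -(2 * (1 / (2 * lam)) * ((w - f) ⬝ᵥ (u - w))) =
      (lam⁻¹ • (f - w)) ⬝ᵥ u - (lam⁻¹ • (f - w)) ⬝ᵥ w := by
    rw [← dotProduct_sub, ← neg_sub f w, neg_dotProduct, smul_dotProduct, smul_eq_mul]
    field_simp
  rw [hcoeff] at hsub
  linarith

theorem mul_add_sum_sub_mul_eq (hlam : lam ≠ 0) (s : ℝ) (θ : ι → ℝ) :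
    lam * J θ + ∑ i, (s - f i) * θ i =
      lam * (J θ - (lam⁻¹ • (f - w)) ⬝ᵥ θ) + ∑ i, (s - w i) * θ i := by
  have hpixels : ∑ i, (s - f i) * θ i = ∑ i, (s - w i) * θ i - (f - w) ⬝ᵥ θ := by
    rw [dotProduct, ← Finset.sum_sub_distrib]
    refine Finset.sum_congr rfl fun i _ => ?_
    rw [Pi.sub_apply]
    ring
  rw [hpixels, smul_dotProduct, smul_eq_mul, mul_sub, mul_inv_cancel_left₀ hlam]
  ring

theorem threshold_strict_solves_shape_optimization_general (hJ : ConvexOn ℝ univ J)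
    (hcoarea : SatisfiesCoarea J) (hlam : 0 < lam)
    (hw : IsMinOn (fun u => J u + 1 / (2 * lam) * ∑ i, (u i - f i) ^ 2) univ w) (s : ℝ) :
    IsMinOn (fun θ => lam * J θ + ∑ i, (s - f i) * θ i) (Icc 0 1) (levelIndicator w s) := by
  have hmin := isMinOn_univ_iff.1 <| hcoarea.isMinOn_sub_dotProduct_levelIndicator
    (isMinOn_sub_dotProduct_of_isMinOn_add_sum_sq hJ hw) s
  refine isMinOn_iff.2 fun θ hθ => ?_
  simp only [mul_add_sum_sub_mul_eq (w := w) hlam.ne' s]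
  gcongr lam * ?_ + ∑ i, ?_ with i
  · exact hmin θ
  · exact sub_mul_levelIndicator_le w s i ⟨hθ.1 i, hθ.2 i⟩

end ROF

/-- Thresholding the ROF minimizer at level `s` (strict upper level set) solves the
discrete shape optimization problem. -/
theorem threshold_strict_solves_shape_optimization
    (N : ℕ) (hN : 1 ≤ N)
    (J : (Fin N → ℝ) → ℝ)
    (hJnonneg : ∀ u, 0 ≤ J u)
    (hJconvex : ConvexOn ℝ Set.univ J)
    (hJlsc : LowerSemicontinuous J)
    (hJhom : ∀ t : ℝ, 0 ≤ t → ∀ u : Fin N → ℝ, J (t • u) = t * J u)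
    (hJcoarea : ∀ u : Fin N → ℝ,
      J u = ∫ t : ℝ, J (fun i => if u i > t then (1 : ℝ) else 0))
    (lam : ℝ) (hlam : 0 < lam) (f : Fin N → ℝ) (w : Fin N → ℝ)
    (hw : ∀ u : Fin N → ℝ,
      J w + (1 / (2 * lam)) * ∑ i, (w i - f i) ^ 2 ≤
      J u + (1 / (2 * lam)) * ∑ i, (u i - f i) ^ 2)
    (s : ℝ) :
    ∀ θ : Fin N → ℝ, (∀ i, θ i = 0 ∨ θ i = 1) →
      lam * J (fun i => if w i > s then (1 : ℝ) else 0) +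
          ∑ i, (s - f i) * (if w i > s then (1 : ℝ) else 0) ≤
        lam * J θ + ∑ i, (s - f i) * θ i :=
  fun _ hθ => threshold_strict_solves_shape_optimization_general hJconvex hJcoarea hlam
    (fun u _ => hw u) s ⟨fun i => by rcases hθ i with h | h <;> simp [h],
      fun i => by rcases hθ i with h | h <;> simp [h]⟩
end

section
/- Let N ≥ 1, let X = Fin N → ℝ with inner product ⟨u,v⟩ = Σᵢ uᵢvᵢ and norm ‖u‖, let J : X → ℝ be nonnegative, convex, lower semicontinuous, positively 1-homogeneous, and satisfy the generalized co-area formula J(u) = ∫_ℝ J(χ_{u>t}) dt for all u ∈ X. Let λ > 0, f ∈ X, let w minimize u ↦ J(u) + (1/(2λ))‖u − f‖², and let s ∈ ℝ. If χ_{w>s} = χ_{w≥s} (i.e. no pixel of w takes the value s), then the minimizer of θ ↦ λ·J(θ) + Σᵢ (s − fᵢ)θᵢ over all θ ∈ X with θᵢ ∈ {0,1} is unique (namely equal to χ_{w>s}). -/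
open MeasureTheory

/-!
The co-area formula makes `J` invariant under adding constants, positively homogeneous, and
additive along truncations: `J u = J (u ⊓ c) + J (u ⊔ c)`. Let `E = χ_{w>s}` and let `ε > 0` be so
small that `w` takes no value in `(s, s + ε)`. Truncating `w` at `s` and at `s + ε` gives
`J (w - ε E) = J w - ε J E`.

The optimality condition `⟨f - w, v⟩ ≤ λ (J (w + v) - J w)` now yields `⟨f - w, θ⟩ ≤ λ J θ` for
every `θ`, by subadditivity, and `λ J E ≤ ⟨f - w, E⟩`, by taking `v = -ε E`. Subtracting, the
shape energy of `θ` exceeds that of `E` by at least `∑ (w i - s) (E i - θ i)`, whose terms are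
nonnegative when `0 ≤ θ ≤ 1` and vanish only where `θ i = E i` or `w i = s`.
-/

section InnerProductSpace

open Set Filter Topology

variable {E : Type*} [NormedAddCommGroup E] [InnerProductSpace ℝ E]

lemma inner_sub_le_of_forall_add_norm_sub_sq_le {J : E → ℝ} (hJ : ConvexOn ℝ univ J) {lam : ℝ}
    (hlam : 0 < lam) {f w : E}
    (hw : ∀ u, J w + 1 / (2 * lam) * ‖w - f‖ ^ 2 ≤ J u + 1 / (2 * lam) * ‖u - f‖ ^ 2) (v : E) :
    inner ℝ (f - w) v ≤ lam * (J (w + v) - J w) := by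
  have perturbed : ∀ t ∈ Ioc (0 : ℝ) 1,
      inner ℝ (f - w) v ≤ lam * (J (w + v) - J w) + t * (‖v‖ ^ 2 / 2) := by
    rintro t ⟨ht, ht1⟩
    have segment : J (w + t • v) ≤ (1 - t) * J w + t * J (w + v) := by
      have h := hJ.2 (mem_univ w) (mem_univ (w + v)) (sub_nonneg.2 ht1) ht.le (by ring)
      rwa [show (1 - t) • w + t • (w + v) = w + t • v by module] at h
    have expand : ‖w + t • v - f‖ ^ 2 =
        ‖w - f‖ ^ 2 - 2 * t * inner ℝ (f - w) v + t ^ 2 * ‖v‖ ^ 2 := by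
      rw [show w + t • v - f = t • v - (f - w) by module, norm_sub_sq_real, norm_smul,
        real_inner_smul_left, real_inner_comm, norm_sub_rev f w, mul_pow, Real.norm_eq_abs, sq_abs]
      ring
    have increment :
        0 ≤ t * (J (w + v) - J w) + (t ^ 2 * ‖v‖ ^ 2 - 2 * t * inner ℝ (f - w) v) / (2 * lam) := by
      have h := (hw (w + t • v)).trans (add_le_add_left segment _)
      rw [expand] at h
      linear_combination h
    have scaled :
        t * inner ℝ (f - w) v ≤ t * (lam * (J (w + v) - J w) + t * (‖v‖ ^ 2 / 2)) := by
      have h := mul_nonneg hlam.le increment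
      field_simp at h
      linarith
    exact le_of_mul_le_mul_left scaled ht
  have limit : Tendsto (fun t => lam * (J (w + v) - J w) + t * (‖v‖ ^ 2 / 2)) (𝓝[>] 0)
      (𝓝 (lam * (J (w + v) - J w))) := by
    refine Tendsto.mono_left (Continuous.tendsto' (by fun_prop) _ _ ?_) nhdsWithin_le_nhds
    rw [zero_mul, add_zero]
  exact ge_of_tendsto limit (eventually_of_mem (Ioc_mem_nhdsGT one_pos) perturbed)

end InnerProductSpace

section LevelSets

open Set Filter Topology

variable {ι : Type*}

/-- The indicator `χ_{u>t}` of the strict upper level set of `u` at level `t`. -/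
noncomputable def upperLevelIndicator (u : ι → ℝ) (t : ℝ) : ι → ℝ :=
  fun i => if u i > t then 1 else 0

lemma upperLevelIndicator_eq_zero_or_one (u : ι → ℝ) (t : ℝ) (i : ι) :
    upperLevelIndicator u t i = 0 ∨ upperLevelIndicator u t i = 1 :=
  (ite_eq_or_eq _ _ _).symm

lemma upperLevelIndicator_add_const (u : ι → ℝ) (c t : ℝ) :
    upperLevelIndicator (u + Function.const ι c) t = upperLevelIndicator u (t - c) := by
  ext i
  simp only [upperLevelIndicator, Pi.add_apply, Function.const_apply, gt_iff_lt,
    sub_lt_iff_lt_add]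

lemma upperLevelIndicator_smul {c : ℝ} (hc : 0 < c) (u : ι → ℝ) (t : ℝ) :
    upperLevelIndicator (c • u) t = upperLevelIndicator u (t / c) := by
  ext i
  simp only [upperLevelIndicator, Pi.smul_apply, smul_eq_mul, gt_iff_lt, div_lt_iff₀' hc]

lemma upperLevelIndicator_inf_const (u : ι → ℝ) (c t : ℝ) :
    upperLevelIndicator (u ⊓ Function.const ι c) t =
      if t < c then upperLevelIndicator u t else 0 := by
  ext i
  split_ifs with h <;> simp [upperLevelIndicator, h]

lemma upperLevelIndicator_sup_const (u : ι → ℝ) (c t : ℝ) :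
    upperLevelIndicator (u ⊔ Function.const ι c) t =
      if t < c then Function.const ι 1 else upperLevelIndicator u t := by
  ext i
  split_ifs with h <;> simp [upperLevelIndicator, h]

lemma sub_mul_upperLevelIndicator_sub_eq_abs (w : ι → ℝ) (s : ℝ) {θ : ι → ℝ} {i : ι}
    (hθ : θ i ∈ Icc 0 1) :
    (w i - s) * (upperLevelIndicator w s i - θ i) =
      |w i - s| * |upperLevelIndicator w s i - θ i| := by
  rw [← abs_mul, eq_comm, abs_eq_self, upperLevelIndicator]
  split_ifs with h
  · exact mul_nonneg (sub_nonneg.2 h.le) (sub_nonneg.2 hθ.2)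
  · exact mul_nonneg_of_nonpos_of_nonpos (sub_nonpos.2 (not_lt.1 h)) (sub_nonpos.2 hθ.1)

lemma exists_pos_forall_lt_imp_add_le [Finite ι] (w : ι → ℝ) (s : ℝ) :
    ∃ ε > 0, ∀ i, s < w i → s + ε ≤ w i := by
  have gap : ∀ᶠ ε in 𝓝[>] (0 : ℝ), ∀ i, s < w i → s + ε ≤ w i := by
    refine eventually_all.2 fun i => eventually_imp_distrib_left.2 fun hi => ?_
    filter_upwards [Ioc_mem_nhdsGT (sub_pos.2 hi)] with ε hε
    linarith [hε.2]
  exact (eventually_mem_nhdsWithin.and gap).exists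

/-- The generalized co-area formula for a functional `J` on `ι → ℝ`. Integrability of the
right-hand side is not assumed: for finite `ι` it is `CoareaFormula.integrable`. -/
def CoareaFormula (J : (ι → ℝ) → ℝ) : Prop :=
  ∀ u, J u = ∫ t : ℝ, J (upperLevelIndicator u t)

namespace CoareaFormula

variable {J : (ι → ℝ) → ℝ}

lemma map_add_const (hJ : CoareaFormula J) (u : ι → ℝ) (c : ℝ) :
    J (u + Function.const ι c) = J u := by
  rw [hJ, hJ u]
  simp only [upperLevelIndicator_add_const]
  exact integral_sub_right_eq_self (fun t => J (upperLevelIndicator u t)) c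

lemma map_smul_of_pos (hJ : CoareaFormula J) {c : ℝ} (hc : 0 < c) (u : ι → ℝ) :
    J (c • u) = c * J u := by
  rw [hJ, hJ u]
  simp only [upperLevelIndicator_smul hc]
  rw [Measure.integral_comp_div (fun t => J (upperLevelIndicator u t)) c, abs_of_pos hc,
    smul_eq_mul]

lemma map_zero (hJ : CoareaFormula J) : J 0 = 0 := by
  have h := hJ.map_smul_of_pos two_pos 0
  rw [smul_zero] at h
  linarith

lemma map_const (hJ : CoareaFormula J) (c : ℝ) : J (Function.const ι c) = 0 := by
  rw [← zero_add (Function.const ι c), hJ.map_add_const, hJ.map_zero]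

lemma map_add_le (hJ : CoareaFormula J) (hconv : ConvexOn ℝ univ J) (u v : ι → ℝ) :
    J (u + v) ≤ J u + J v := by
  have midpoint := hconv.2 (mem_univ u) (mem_univ v) one_half_pos.le one_half_pos.le (add_halves 1)
  rw [← smul_add, hJ.map_smul_of_pos one_half_pos, smul_eq_mul, smul_eq_mul] at midpoint
  linarith

variable [Finite ι]

lemma integrable (hJ : CoareaFormula J) (u : ι → ℝ) :
    Integrable fun t : ℝ => J (upperLevelIndicator u t) := by
  have := Fintype.ofFinite ι
  have measurable_level : Measurable (upperLevelIndicator u) :=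
    measurable_pi_lambda _ fun i => Measurable.ite measurableSet_Iio measurable_const
      measurable_const
  have finite_range : (range (upperLevelIndicator u)).Finite := by
    refine (Finite.pi' fun _ => toFinite {0, 1}).subset ?_
    rintro _ ⟨t, rfl⟩
    exact upperLevelIndicator_eq_zero_or_one u t
  let φ : SimpleFunc ℝ (ι → ℝ) :=
    ⟨upperLevelIndicator u, fun x => measurable_level (measurableSet_singleton x), finite_range⟩
  have support_subset :
      Function.support (fun t => J (upperLevelIndicator u t)) ⊆ Icc (-‖u‖) ‖u‖ := by
    have abs_le_norm (i : ι) : |u i| ≤ ‖u‖ := norm_le_pi_norm u i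
    refine fun t ht => ⟨?_, ?_⟩ <;> by_contra! h <;> apply ht
    · have : upperLevelIndicator u t = Function.const ι 1 :=
        funext fun i => if_pos (h.trans_le (abs_le.1 (abs_le_norm i)).1)
      simp only [this, hJ.map_const]
    · have : upperLevelIndicator u t = 0 :=
        funext fun i => if_neg ((abs_le.1 (abs_le_norm i)).2.trans h.le).not_gt
      simp only [this, hJ.map_zero]
  exact (integrableOn_iff_integrable_of_support_subset support_subset).1
    (φ.map J).integrable_of_isFiniteMeasure

lemma map_inf_const_add_map_sup_const (hJ : CoareaFormula J) (u : ι → ℝ) (c : ℝ) :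
    J (u ⊓ Function.const ι c) + J (u ⊔ Function.const ι c) = J u := by
  have below : J (u ⊓ Function.const ι c) = ∫ t in Iio c, J (upperLevelIndicator u t) := by
    rw [hJ, ← integral_indicator measurableSet_Iio]
    congr with t
    simp only [upperLevelIndicator_inf_const, indicator, mem_Iio, apply_ite J, hJ.map_zero]
  have above : J (u ⊔ Function.const ι c) = ∫ t in (Iio c)ᶜ, J (upperLevelIndicator u t) := by
    rw [hJ, ← integral_indicator measurableSet_Iio.compl]
    congr with t
    simp only [upperLevelIndicator_sup_const, indicator, mem_compl_iff, mem_Iio, ite_not,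
      apply_ite J, hJ.map_const]
  rw [below, above, integral_add_compl measurableSet_Iio (hJ.integrable u), ← hJ u]

lemma map_sub_smul_upperLevelIndicator (hJ : CoareaFormula J) {w : ι → ℝ} {s ε : ℝ} (hε : 0 < ε)
    (hgap : ∀ i, s < w i → s + ε ≤ w i) :
    J (w - ε • upperLevelIndicator w s) = J w - ε * J (upperLevelIndicator w s) := by
  set χ := upperLevelIndicator w s with hχ
  have below : (w - ε • χ) ⊓ Function.const ι s = w ⊓ Function.const ι s := by
    ext i
    by_cases h : s < w i
    · have := hgap i h
      simp [hχ, upperLevelIndicator, h, h.le, le_sub_iff_add_le, this]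
    · simp [hχ, upperLevelIndicator, h]
  have between : (w ⊔ Function.const ι s) ⊓ Function.const ι (s + ε) =
      ε • χ + Function.const ι s := by
    ext i
    by_cases h : s < w i
    · simp [hχ, upperLevelIndicator, h, h.le, hgap i h, add_comm]
    · simp [hχ, upperLevelIndicator, h, not_lt.1 h, hε.le]
  have above : (w ⊔ Function.const ι s) ⊔ Function.const ι (s + ε) =
      ((w - ε • χ) ⊔ Function.const ι s) + Function.const ι ε := by
    ext i
    by_cases h : s < w i
    · simp [hχ, upperLevelIndicator, h, h.le, hgap i h, le_sub_iff_add_le]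
    · simp [hχ, upperLevelIndicator, h, not_lt.1 h, hε.le]
  have split_sub := hJ.map_inf_const_add_map_sup_const (w - ε • χ) s
  have split_w := hJ.map_inf_const_add_map_sup_const w s
  have split_sup := hJ.map_inf_const_add_map_sup_const (w ⊔ Function.const ι s) (s + ε)
  rw [below] at split_sub
  rw [between, above, hJ.map_add_const, hJ.map_add_const, hJ.map_smul_of_pos hε] at split_sup
  linarith

end CoareaFormula

end LevelSets

section ShapeOptimization

open Set

variable {ι : Type*} [Fintype ι] {J : (ι → ℝ) → ℝ} {lam s : ℝ} {f w θ : ι → ℝ}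

/-- `w` minimizes the Rudin–Osher–Fatemi functional with regularizer `J`, parameter `lam` and
data `f`. The squared Euclidean norm is written as a sum, since `ι → ℝ` carries the sup norm. -/
def IsROFMinimizer (J : (ι → ℝ) → ℝ) (lam : ℝ) (f w : ι → ℝ) : Prop :=
  ∀ u : ι → ℝ, J w + (1 / (2 * lam)) * ∑ i, (w i - f i) ^ 2 ≤
    J u + (1 / (2 * lam)) * ∑ i, (u i - f i) ^ 2

/-- The objective of the shape optimization problem at level `s`, defined for every `θ` and not
only for indicators. -/
def shapeEnergy (J : (ι → ℝ) → ℝ) (lam : ℝ) (f : ι → ℝ) (s : ℝ) (θ : ι → ℝ) : ℝ :=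
  lam * J θ + ∑ i, (s - f i) * θ i

namespace IsROFMinimizer

lemma sum_sub_mul_le (hw : IsROFMinimizer J lam f w) (hconv : ConvexOn ℝ univ J)
    (hlam : 0 < lam) (v : ι → ℝ) :
    ∑ i, (f i - w i) * v i ≤ lam * (J (w + v) - J w) := by
  have h := inner_sub_le_of_forall_add_norm_sub_sq_le
    (hconv.comp_linearMap (WithLp.linearEquiv 2 ℝ (ι → ℝ)).toLinearMap) hlam
    (f := WithLp.toLp 2 f) (w := WithLp.toLp 2 w)
    (fun u => by simpa [EuclideanSpace.real_norm_sq_eq] using hw u.ofLp) (WithLp.toLp 2 v)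
  simpa [PiLp.inner_apply, mul_comm] using h

lemma sum_sub_mul_le_mul (hw : IsROFMinimizer J lam f w) (hconv : ConvexOn ℝ univ J)
    (hcoarea : CoareaFormula J) (hlam : 0 < lam) (θ : ι → ℝ) :
    ∑ i, (f i - w i) * θ i ≤ lam * J θ := by
  refine (hw.sum_sub_mul_le hconv hlam θ).trans (mul_le_mul_of_nonneg_left ?_ hlam.le)
  exact sub_le_iff_le_add'.2 (hcoarea.map_add_le hconv w θ)

lemma mul_upperLevelIndicator_le_sum (hw : IsROFMinimizer J lam f w)
    (hconv : ConvexOn ℝ univ J) (hcoarea : CoareaFormula J) (hlam : 0 < lam) (s : ℝ) :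
    lam * J (upperLevelIndicator w s) ≤ ∑ i, (f i - w i) * upperLevelIndicator w s i := by
  obtain ⟨ε, hε, hgap⟩ := exists_pos_forall_lt_imp_add_le w s
  have optimality := hw.sum_sub_mul_le hconv hlam (-(ε • upperLevelIndicator w s))
  rw [← sub_eq_add_neg, hcoarea.map_sub_smul_upperLevelIndicator hε hgap] at optimality
  simp only [Pi.neg_apply, Pi.smul_apply, smul_eq_mul, mul_neg, Finset.sum_neg_distrib,
    mul_left_comm _ ε, ← Finset.mul_sum] at optimality
  refine le_of_mul_le_mul_left ?_ hε
  linarith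

lemma shapeEnergy_upperLevelIndicator_add_le (hw : IsROFMinimizer J lam f w)
    (hconv : ConvexOn ℝ univ J) (hcoarea : CoareaFormula J) (hlam : 0 < lam)
    (hθ : ∀ i, θ i ∈ Icc 0 1) :
    shapeEnergy J lam f s (upperLevelIndicator w s) +
        ∑ i, |w i - s| * |upperLevelIndicator w s i - θ i| ≤ shapeEnergy J lam f s θ := by
  have lower := hw.sum_sub_mul_le_mul hconv hcoarea hlam θ
  have upper := hw.mul_upperLevelIndicator_le_sum hconv hcoarea hlam s
  simp only [← sub_mul_upperLevelIndicator_sub_eq_abs w s (hθ _), shapeEnergy]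
  have regroup : ∑ i, (w i - s) * (upperLevelIndicator w s i - θ i) =
      (∑ i, (f i - w i) * θ i + ∑ i, (s - f i) * θ i) -
        (∑ i, (f i - w i) * upperLevelIndicator w s i +
          ∑ i, (s - f i) * upperLevelIndicator w s i) := by
    simp only [← Finset.sum_add_distrib, ← Finset.sum_sub_distrib]
    exact Finset.sum_congr rfl fun i _ => by ring
  linarith

end IsROFMinimizer

theorem shape_optimization_unique_minimizer_general (hconv : ConvexOn ℝ univ J)
    (hcoarea : CoareaFormula J) (hlam : 0 < lam) (hw : IsROFMinimizer J lam f w)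
    (hθ : ∀ i, θ i ∈ Icc 0 1)
    (hle : shapeEnergy J lam f s θ ≤ shapeEnergy J lam f s (upperLevelIndicator w s))
    {i : ι} (hi : w i ≠ s) : θ i = upperLevelIndicator w s i := by
  have deficit := hw.shapeEnergy_upperLevelIndicator_add_le hconv hcoarea hlam hθ (s := s)
  have term_le : |w i - s| * |upperLevelIndicator w s i - θ i| ≤
      ∑ j, |w j - s| * |upperLevelIndicator w s j - θ j| :=
    Finset.single_le_sum (f := fun j => |w j - s| * |upperLevelIndicator w s j - θ j|)
      (fun _ _ => by positivity) (Finset.mem_univ i)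
  have abs_nonpos : |upperLevelIndicator w s i - θ i| ≤ 0 :=
    nonpos_of_mul_nonpos_right (by linarith) (abs_pos.2 (sub_ne_zero.2 hi))
  exact (sub_eq_zero.1 (abs_nonpos_iff.1 abs_nonpos)).symm

end ShapeOptimization

/-- If the strict and non-strict level sets of the ROF minimizer at level `s` coincide,
then the shape optimization problem has a unique minimizer, namely `χ_{w>s}`. -/
theorem shape_optimization_unique_minimizer
    (N : ℕ) (hN : 1 ≤ N)
    (J : (Fin N → ℝ) → ℝ)
    (hJnonneg : ∀ u, 0 ≤ J u)
    (hJconvex : ConvexOn ℝ Set.univ J)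
    (hJlsc : LowerSemicontinuous J)
    (hJhom : ∀ t : ℝ, 0 ≤ t → ∀ u : Fin N → ℝ, J (t • u) = t * J u)
    (hJcoarea : ∀ u : Fin N → ℝ,
      J u = ∫ t : ℝ, J (fun i => if u i > t then (1 : ℝ) else 0))
    (lam : ℝ) (hlam : 0 < lam) (f : Fin N → ℝ) (w : Fin N → ℝ)
    (hw : ∀ u : Fin N → ℝ,
      J w + (1 / (2 * lam)) * ∑ i, (w i - f i) ^ 2 ≤
      J u + (1 / (2 * lam)) * ∑ i, (u i - f i) ^ 2)
    (s : ℝ)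
    (hlevel : (fun i => if w i > s then (1 : ℝ) else 0) =
              (fun i => if w i ≥ s then (1 : ℝ) else 0)) :
    ∀ θ : Fin N → ℝ, (∀ i, θ i = 0 ∨ θ i = 1) →
      (∀ θ' : Fin N → ℝ, (∀ i, θ' i = 0 ∨ θ' i = 1) →
        lam * J θ + ∑ i, (s - f i) * θ i ≤ lam * J θ' + ∑ i, (s - f i) * θ' i) →
      θ = (fun i => if w i > s then (1 : ℝ) else 0) := by
  intro θ hθ hmin
  ext i
  have hi : w i ≠ s := fun h => by simpa [h] using congrFun hlevel i
  exact shape_optimization_unique_minimizer_general hJconvex hJcoarea hlam hw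
    (fun j => by rcases hθ j with h | h <;> simp [h])
    (hmin _ (upperLevelIndicator_eq_zero_or_one w s)) hi
end

section
/- Let n, m ≥ 1 and let J : ((Fin n × Fin m) → ℝ) → ℝ be the discrete Manhattan total variation J(u) = Σ_{i,j} (|(∇ˣu)_{i,j}| + |(∇ʸu)_{i,j}|). Then J satisfies the generalized co-area formula: for every u, J(u) = ∫_ℝ J(χ_{u>t}) dt, where (χ_{u>t})_{i,j} = 1 if u_{i,j} > t and 0 otherwise. -/
open MeasureTheory

/-- Discrete gradient in the x-direction with Neumann boundary conditions. -/
def gradX {n m : ℕ} (u : Fin n × Fin m → ℝ) (q : Fin n × Fin m) : ℝ :=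
  if h : (q.1 : ℕ) + 1 < n then u (⟨(q.1 : ℕ) + 1, h⟩, q.2) - u q else 0

/-- Discrete gradient in the y-direction with Neumann boundary conditions. -/
def gradY {n m : ℕ} (u : Fin n × Fin m → ℝ) (q : Fin n × Fin m) : ℝ :=
  if h : (q.2 : ℕ) + 1 < m then u (q.1, ⟨(q.2 : ℕ) + 1, h⟩) - u q else 0

/-- The discrete Manhattan total variation. -/
def manhattanTV {n m : ℕ} (u : Fin n × Fin m → ℝ) : ℝ :=
  ∑ q : Fin n × Fin m, (|gradX u q| + |gradY u q|)

/-!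
The co-area formula is additive in the functional, so it suffices to check it for a single
difference `|u x - u y|`. There the level sets at height `t` separate `x` from `y` exactly when `t`
lies between the two values, a set of heights of length `|u x - u y|`. Neumann boundary terms
contribute the zero functional.
-/

/-- The indicator `χ_{u>t}` of the strict upper level set of `u` at height `t`, as a real-valued
function, so that functionals of `u` apply to it. -/
noncomputable def superlevelIndicator {α : Type*} (u : α → ℝ) (t : ℝ) : α → ℝ :=
  fun x => if u x > t then 1 else 0

/-- The generalized co-area formula for a functional `J`. Integrability over the heights is part of
the notion: the Bochner integral of a non-integrable function is `0`, and additivity in `J` would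
fail without it. -/
structure SatisfiesCoarea_s4 {α : Type*} (J : (α → ℝ) → ℝ) : Prop where
  integrable_superlevelIndicator (u : α → ℝ) :
    Integrable fun t => J (superlevelIndicator u t)
  eq_integral_superlevelIndicator (u : α → ℝ) :
    J u = ∫ t, J (superlevelIndicator u t)

theorem abs_superlevelIndicator_sub {α : Type*} (u : α → ℝ) (t : ℝ) (x y : α) :
    |superlevelIndicator u t x - superlevelIndicator u t y| =
      (Set.Ico (min (u x) (u y)) (max (u x) (u y))).indicator 1 t := by
  rcases lt_or_ge t (u x) with hx | hx <;> rcases lt_or_ge t (u y) with hy | hy <;>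
    simp [superlevelIndicator, hx, hy, hx.not_gt, hy.not_gt]

namespace SatisfiesCoarea_s4

variable {α : Type*}

theorem zero : SatisfiesCoarea_s4 fun _ : α → ℝ => 0 where
  integrable_superlevelIndicator _ := integrable_zero ℝ ℝ volume
  eq_integral_superlevelIndicator _ := integral_zero ℝ ℝ |>.symm

theorem add {J K : (α → ℝ) → ℝ} (hJ : SatisfiesCoarea_s4 J) (hK : SatisfiesCoarea_s4 K) :
    SatisfiesCoarea_s4 fun u => J u + K u where
  integrable_superlevelIndicator u :=
    (hJ.integrable_superlevelIndicator u).add (hK.integrable_superlevelIndicator u)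
  eq_integral_superlevelIndicator u := by
    rw [integral_add (hJ.integrable_superlevelIndicator u) (hK.integrable_superlevelIndicator u),
      ← hJ.eq_integral_superlevelIndicator, ← hK.eq_integral_superlevelIndicator]

theorem sum {ι : Type*} {s : Finset ι} {J : ι → (α → ℝ) → ℝ}
    (hJ : ∀ i ∈ s, SatisfiesCoarea_s4 (J i)) : SatisfiesCoarea_s4 fun u => ∑ i ∈ s, J i u where
  integrable_superlevelIndicator u :=
    integrable_finsetSum s fun i hi => (hJ i hi).integrable_superlevelIndicator u
  eq_integral_superlevelIndicator u := by
    rw [integral_finsetSum s fun i hi => (hJ i hi).integrable_superlevelIndicator u]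
    exact Finset.sum_congr rfl fun i hi => (hJ i hi).eq_integral_superlevelIndicator u

theorem abs_sub (x y : α) : SatisfiesCoarea_s4 fun u : α → ℝ => |u x - u y| where
  integrable_superlevelIndicator u := by
    simp_rw [abs_superlevelIndicator_sub]
    exact (integrable_indicator_iff measurableSet_Ico).2 (integrableOn_const (by simp))
  eq_integral_superlevelIndicator u := by
    simp_rw [abs_superlevelIndicator_sub]
    rw [integral_indicator_one measurableSet_Ico, Real.volume_real_Ico_of_le min_le_max,
      max_sub_min_eq_abs']

end SatisfiesCoarea_s4

theorem satisfiesCoarea_abs_gradX {n m : ℕ} (q : Fin n × Fin m) :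
    SatisfiesCoarea_s4 fun u => |gradX u q| := by
  unfold gradX
  split_ifs
  · exact .abs_sub _ _
  · simpa only [abs_zero] using .zero

theorem satisfiesCoarea_abs_gradY {n m : ℕ} (q : Fin n × Fin m) :
    SatisfiesCoarea_s4 fun u => |gradY u q| := by
  unfold gradY
  split_ifs
  · exact .abs_sub _ _
  · simpa only [abs_zero] using .zero

theorem satisfiesCoarea_manhattanTV {n m : ℕ} :
    SatisfiesCoarea_s4 (manhattanTV : (Fin n × Fin m → ℝ) → ℝ) :=
  .sum fun q _ => (satisfiesCoarea_abs_gradX q).add (satisfiesCoarea_abs_gradY q)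

/-- The discrete Manhattan total variation satisfies the generalized co-area formula. -/
theorem manhattanTV_coarea (n m : ℕ) (hn : 1 ≤ n) (hm : 1 ≤ m)
    (u : Fin n × Fin m → ℝ) :
    manhattanTV u =
      ∫ t : ℝ, manhattanTV (fun q => if u q > t then (1 : ℝ) else 0) :=
  satisfiesCoarea_manhattanTV.eq_integral_superlevelIndicator u
end

section
/- Let n, m ≥ 1, λ > 0, w₀ : Fin n × Fin m → ℝ, and let J(w) = Σ_{i,j} |(∇w)_{i,j}| where |(∇w)_{i,j}| = √((∇ˣw)_{i,j}² + (∇ʸw)_{i,j}²). Let ξ̄ minimize ξ ↦ ‖λ·div ξ − w₀‖² over all vector fields ξ with (ξˣ_{i,j})² + (ξʸ_{i,j})² ≤ 1 for all i,j. Then w̄ = w₀ − λ·div ξ̄ is the unique minimizer over all w of the energy J(w) + (1/(2λ))‖w − w₀‖². -/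
/-- The discrete divergence: the negative adjoint of the gradient `(∇ˣ, ∇ʸ)`. -/
def divv {n m : ℕ} (px py : Fin n × Fin m → ℝ) (q : Fin n × Fin m) : ℝ :=
  (if (q.1 : ℕ) + 1 < n then px q else 0) -
    (if 0 < (q.1 : ℕ) then
      px (⟨(q.1 : ℕ) - 1, lt_of_le_of_lt (Nat.sub_le _ _) q.1.isLt⟩, q.2) else 0) +
  (if (q.2 : ℕ) + 1 < m then py q else 0) -
    (if 0 < (q.2 : ℕ) then
      py (q.1, ⟨(q.2 : ℕ) - 1, lt_of_le_of_lt (Nat.sub_le _ _) q.2.isLt⟩) else 0)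

/-!
The isotropic total variation is the support function of the set `K` of divergences of vector
fields valued in the unit disc: `J w = max {⟪u, w⟫ | u ∈ K}`. If `lam • v` is the projection of `w₀`
onto the convex set `lam • K`, then `v` maximizes `⟪·, w₀ - lam • v⟫` over `K`, so
`v ∈ ∂J (w₀ - lam • v)`. This is the optimality condition for the strongly convex function
`J w + (1 / (2 * lam)) * ‖w - w₀‖ ^ 2`.
-/

open Set
open scoped Pointwise RealInnerProductSpace

section SupportFunction

variable {E : Type*} [NormedAddCommGroup E]

/-- The Rudin-Osher-Fatemi energy with data `w₀` and fidelity parameter `lam`, for an arbitrary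
regularizer `J`. -/
noncomputable def rofEnergy (J : E → ℝ) (lam : ℝ) (w₀ w : E) : ℝ :=
  J w + (1 / (2 * lam)) * ‖w - w₀‖ ^ 2

theorem isMinOn_univ_iff_eq_of_quadratic_growth {F : E → ℝ} {c : ℝ} (hc : 0 < c) {x : E}
    (hF : ∀ y, F x + c * ‖y - x‖ ^ 2 ≤ F y) (y : E) : IsMinOn F univ y ↔ y = x := by
  rw [isMinOn_univ_iff]
  constructor
  · intro hy
    have hsq : c * ‖y - x‖ ^ 2 ≤ 0 := by linarith [hF y, hy x]
    have hnorm : ‖y - x‖ ^ 2 = 0 :=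
      le_antisymm (nonpos_of_mul_nonpos_right hsq hc) (sq_nonneg _)
    exact sub_eq_zero.1 (norm_eq_zero.1 (sq_eq_zero_iff.1 hnorm))
  · rintro rfl z
    exact (le_add_of_nonneg_right (by positivity)).trans (hF z)

variable [InnerProductSpace ℝ E] {K : Set E}

theorem inner_sub_sub_nonpos_of_forall_norm_sub_le (hK : Convex ℝ K) {w v : E} (hv : v ∈ K)
    (hmin : ∀ u ∈ K, ‖w - v‖ ≤ ‖w - u‖) {u : E} (hu : u ∈ K) : ⟪w - v, u - v⟫ ≤ 0 := by
  have : Nonempty K := ⟨⟨v, hv⟩⟩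
  have hbdd : BddBelow (range fun u : K => ‖w - u‖) :=
    ⟨0, forall_mem_range.2 fun _ => norm_nonneg _⟩
  have hinf : ‖w - v‖ = ⨅ u : K, ‖w - u‖ :=
    le_antisymm (le_ciInf fun u => hmin u u.2) (ciInf_le hbdd ⟨v, hv⟩)
  exact (norm_eq_iInf_iff_real_inner_le_zero hK hv).1 hinf u hu

variable {lam : ℝ} {w₀ v : E}

theorem inner_le_inner_of_forall_norm_smul_sub_le (hK : Convex ℝ K) (hlam : 0 < lam) (hv : v ∈ K)
    (hmin : ∀ u ∈ K, ‖lam • v - w₀‖ ≤ ‖lam • u - w₀‖) {u : E} (hu : u ∈ K) :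
    ⟪u, w₀ - lam • v⟫ ≤ ⟪v, w₀ - lam • v⟫ := by
  have hproj : ∀ z ∈ lam • K, ‖w₀ - lam • v‖ ≤ ‖w₀ - z‖ := by
    rintro _ ⟨z, hz, rfl⟩
    simpa only [norm_sub_rev w₀] using hmin z hz
  have hvar : ⟪w₀ - lam • v, lam • u - lam • v⟫ ≤ 0 :=
    inner_sub_sub_nonpos_of_forall_norm_sub_le (hK.smul lam) (smul_mem_smul_set hv) hproj
      (smul_mem_smul_set hu)
  rw [← smul_sub, real_inner_smul_right, inner_sub_right] at hvar
  rw [real_inner_comm _ u, real_inner_comm _ v]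
  exact sub_nonpos.1 (nonpos_of_mul_nonpos_right hvar hlam)

theorem norm_sub_sq_eq_add_sub_inner (lam : ℝ) (w₀ v w : E) :
    ‖w - w₀‖ ^ 2 = ‖(w₀ - lam • v) - w₀‖ ^ 2 + ‖w - (w₀ - lam • v)‖ ^ 2
      - 2 * lam * (⟪v, w⟫ - ⟪v, w₀ - lam • v⟫) := by
  have hcross : ⟪w - (w₀ - lam • v), (w₀ - lam • v) - w₀⟫
      = -(lam * (⟪v, w⟫ - ⟪v, w₀ - lam • v⟫)) := by
    rw [sub_sub_cancel_left, inner_neg_right, real_inner_smul_right, real_inner_comm,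
      inner_sub_right]
  rw [← sub_add_sub_cancel w (w₀ - lam • v) w₀, norm_add_sq_real, hcross]
  ring

theorem rofEnergy_quadratic_growth {J : E → ℝ}
    (hJ : ∀ w, IsLUB ((fun u => ⟪u, w⟫) '' K) (J w)) (hK : Convex ℝ K) (hlam : 0 < lam)
    (hv : v ∈ K) (hmin : ∀ u ∈ K, ‖lam • v - w₀‖ ≤ ‖lam • u - w₀‖) (w : E) :
    rofEnergy J lam w₀ (w₀ - lam • v) + (1 / (2 * lam)) * ‖w - (w₀ - lam • v)‖ ^ 2
      ≤ rofEnergy J lam w₀ w := by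
  have hJ_le : J (w₀ - lam • v) ≤ ⟪v, w₀ - lam • v⟫ :=
    (hJ _).2 <| forall_mem_image.2 fun u hu =>
      inner_le_inner_of_forall_norm_smul_sub_le hK hlam hv hmin hu
  have hle_J : ⟪v, w⟫ ≤ J w := (hJ w).1 (mem_image_of_mem _ hv)
  have hfidelity : (1 / (2 * lam)) * ‖w - w₀‖ ^ 2
      = (1 / (2 * lam)) * ‖(w₀ - lam • v) - w₀‖ ^ 2
        + (1 / (2 * lam)) * ‖w - (w₀ - lam • v)‖ ^ 2 - (⟪v, w⟫ - ⟪v, w₀ - lam • v⟫) := by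
    rw [norm_sub_sq_eq_add_sub_inner lam w₀ v w]
    field_simp
  unfold rofEnergy
  linarith

theorem isMinOn_rofEnergy_iff {J : E → ℝ}
    (hJ : ∀ w, IsLUB ((fun u => ⟪u, w⟫) '' K) (J w)) (hK : Convex ℝ K) (hlam : 0 < lam)
    (hv : v ∈ K) (hmin : ∀ u ∈ K, ‖lam • v - w₀‖ ≤ ‖lam • u - w₀‖) (w : E) :
    IsMinOn (rofEnergy J lam w₀) univ w ↔ w = w₀ - lam • v :=
  isMinOn_univ_iff_eq_of_quadratic_growth (by positivity : 0 < 1 / (2 * lam))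
    (rofEnergy_quadratic_growth hJ hK hlam hv hmin) w

end SupportFunction

theorem sum_backwardDiff_mul_eq_neg_sum_mul_forwardDiff {R : Type*} [CommRing R] {n : ℕ}
    (f g : Fin n → R) :
    ∑ i : Fin n, ((if (i : ℕ) + 1 < n then f i else 0) -
        (if 0 < (i : ℕ) then f ⟨(i : ℕ) - 1, lt_of_le_of_lt (Nat.sub_le _ _) i.isLt⟩ else 0)) * g i
      = -∑ i : Fin n, f i * (if h : (i : ℕ) + 1 < n then g ⟨(i : ℕ) + 1, h⟩ - g i else 0) := by
  cases n with
  | zero => simp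
  | succ k =>
    have hkeep : ∑ i : Fin (k + 1), (if (i : ℕ) + 1 < k + 1 then f i else 0) * g i
        = ∑ i : Fin k, f i.castSucc * g i.castSucc := by
      simp [Fin.sum_univ_castSucc]
    have hshift : ∑ i : Fin (k + 1), (if 0 < (i : ℕ) then
          f ⟨(i : ℕ) - 1, lt_of_le_of_lt (Nat.sub_le _ _) i.isLt⟩ else 0) * g i
        = ∑ i : Fin k, f i.castSucc * g i.succ := by
      simp [Fin.sum_univ_succ, Fin.castSucc, Fin.castAdd, Fin.castLE]
    have hforward : ∑ i : Fin (k + 1), f i *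
          (if h : (i : ℕ) + 1 < k + 1 then g ⟨(i : ℕ) + 1, h⟩ - g i else 0)
        = ∑ i : Fin k, f i.castSucc * (g i.succ - g i.castSucc) := by
      simp [Fin.sum_univ_castSucc, Fin.succ]
    rw [hforward]
    simp only [sub_mul, mul_sub, Finset.sum_sub_distrib]
    rw [hkeep, hshift, neg_sub]

theorem mul_add_mul_le_sqrt_of_sq_add_sq_le_one {a b : ℝ} (h : a ^ 2 + b ^ 2 ≤ 1) (c d : ℝ) :
    a * c + b * d ≤ √(c ^ 2 + d ^ 2) := by
  refine Real.le_sqrt_of_sq_le ?_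
  calc (a * c + b * d) ^ 2
      ≤ (a * c + b * d) ^ 2 + (a * d - b * c) ^ 2 := le_add_of_nonneg_right (sq_nonneg _)
    _ = (a ^ 2 + b ^ 2) * (c ^ 2 + d ^ 2) := by ring
    _ ≤ c ^ 2 + d ^ 2 := mul_le_of_le_one_left (by positivity) h

section Grid

variable {n m : ℕ}

theorem sum_divv_mul (px py w : Fin n × Fin m → ℝ) :
    ∑ q, divv px py q * w q = -∑ q, (px q * gradX w q + py q * gradY w q) := by
  have hx : ∑ q : Fin n × Fin m, ((if (q.1 : ℕ) + 1 < n then px q else 0) -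
        (if 0 < (q.1 : ℕ) then
          px (⟨(q.1 : ℕ) - 1, lt_of_le_of_lt (Nat.sub_le _ _) q.1.isLt⟩, q.2) else 0)) * w q
      = -∑ q, px q * gradX w q := by
    rw [Fintype.sum_prod_type_right, Fintype.sum_prod_type_right, ← Finset.sum_neg_distrib]
    exact Finset.sum_congr rfl fun j _ =>
      sum_backwardDiff_mul_eq_neg_sum_mul_forwardDiff (fun i => px (i, j)) (fun i => w (i, j))
  have hy : ∑ q : Fin n × Fin m, ((if (q.2 : ℕ) + 1 < m then py q else 0) -
        (if 0 < (q.2 : ℕ) then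
          py (q.1, ⟨(q.2 : ℕ) - 1, lt_of_le_of_lt (Nat.sub_le _ _) q.2.isLt⟩) else 0)) * w q
      = -∑ q, py q * gradY w q := by
    rw [Fintype.sum_prod_type, Fintype.sum_prod_type, ← Finset.sum_neg_distrib]
    exact Finset.sum_congr rfl fun i _ =>
      sum_backwardDiff_mul_eq_neg_sum_mul_forwardDiff (fun j => py (i, j)) (fun j => w (i, j))
  rw [Finset.sum_add_distrib, neg_add, ← hx, ← hy, ← Finset.sum_add_distrib]
  refine Finset.sum_congr rfl fun q _ => ?_
  unfold divv
  ring

/-- The divergence as a linear map into the Euclidean space of images. -/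
noncomputable def divergence :
    (Fin n × Fin m → ℝ) × (Fin n × Fin m → ℝ) →ₗ[ℝ] EuclideanSpace ℝ (Fin n × Fin m) where
  toFun p := WithLp.toLp 2 (divv p.1 p.2)
  map_add' p p' := by
    ext q
    simp only [divv, Prod.fst_add, Prod.snd_add, Pi.add_apply, PiLp.add_apply]
    split_ifs <;> ring
  map_smul' t p := by
    ext q
    simp only [divv, Prod.smul_fst, Prod.smul_snd, Pi.smul_apply, PiLp.smul_apply, smul_eq_mul,
      RingHom.id_apply]
    split_ifs <;> ring

/-- The vector fields with values in the closed Euclidean unit disc, the constraint set of the dual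
problem. -/
def unitFields (n m : ℕ) : Set ((Fin n × Fin m → ℝ) × (Fin n × Fin m → ℝ)) :=
  {p | ∀ q, p.1 q ^ 2 + p.2 q ^ 2 ≤ 1}

/-- The isotropic total variation `∑ |∇w|`. -/
noncomputable def isoTV (w : EuclideanSpace ℝ (Fin n × Fin m)) : ℝ :=
  ∑ q, √(gradX w.ofLp q ^ 2 + gradY w.ofLp q ^ 2)

theorem inner_divergence (p : (Fin n × Fin m → ℝ) × (Fin n × Fin m → ℝ))
    (w : EuclideanSpace ℝ (Fin n × Fin m)) :
    ⟪divergence p, w⟫ = -∑ q, (p.1 q * gradX w.ofLp q + p.2 q * gradY w.ofLp q) := by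
  rw [← sum_divv_mul, PiLp.inner_apply]
  exact Finset.sum_congr rfl fun q _ => mul_comm _ _

theorem convex_unitFields (n m : ℕ) : Convex ℝ (unitFields n m) := by
  intro p hp p' hp' s t hs ht hst q
  have hsq : ∀ a b : ℝ, (s * a + t * b) ^ 2 ≤ s * a ^ 2 + t * b ^ 2 := fun a b =>
    (Even.convexOn_pow even_two).2 (mem_univ a) (mem_univ b) hs ht hst
  calc (s * p.1 q + t * p'.1 q) ^ 2 + (s * p.2 q + t * p'.2 q) ^ 2
      ≤ s * (p.1 q ^ 2 + p.2 q ^ 2) + t * (p'.1 q ^ 2 + p'.2 q ^ 2) := by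
        linarith [hsq (p.1 q) (p'.1 q), hsq (p.2 q) (p'.2 q)]
    _ ≤ s * 1 + t * 1 := by gcongr; exacts [hp q, hp' q]
    _ = 1 := by rw [mul_one, mul_one, hst]

theorem inner_divergence_le_isoTV {p : (Fin n × Fin m → ℝ) × (Fin n × Fin m → ℝ)}
    (hp : p ∈ unitFields n m) (w : EuclideanSpace ℝ (Fin n × Fin m)) :
    ⟪divergence p, w⟫ ≤ isoTV w := by
  rw [inner_divergence, ← Finset.sum_neg_distrib]
  refine Finset.sum_le_sum fun q _ => ?_
  have hneg : (-p.1 q) ^ 2 + (-p.2 q) ^ 2 ≤ 1 := by simpa only [neg_sq] using hp q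
  linarith [mul_add_mul_le_sqrt_of_sq_add_sq_le_one hneg (gradX w.ofLp q) (gradY w.ofLp q)]

theorem exists_mem_unitFields_inner_divergence_eq_isoTV (w : EuclideanSpace ℝ (Fin n × Fin m)) :
    ∃ p ∈ unitFields n m, ⟪divergence p, w⟫ = isoTV w := by
  -- The field is `-∇w / |∇w|`, which division by zero makes `0` where `∇w` vanishes.
  let normGrad (q : Fin n × Fin m) : ℝ := √(gradX w.ofLp q ^ 2 + gradY w.ofLp q ^ 2)
  have hsq (q) : normGrad q ^ 2 = gradX w.ofLp q ^ 2 + gradY w.ofLp q ^ 2 :=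
    Real.sq_sqrt (by positivity)
  refine ⟨(fun q => -gradX w.ofLp q / normGrad q, fun q => -gradY w.ofLp q / normGrad q),
    fun q => ?_, ?_⟩
  · simp only [div_pow, neg_sq, ← add_div, ← hsq]
    exact div_self_le_one _
  · rw [inner_divergence, ← Finset.sum_neg_distrib]
    refine Finset.sum_congr rfl fun q _ => ?_
    calc -(-gradX w.ofLp q / normGrad q * gradX w.ofLp q
            + -gradY w.ofLp q / normGrad q * gradY w.ofLp q)
        = (gradX w.ofLp q ^ 2 + gradY w.ofLp q ^ 2) / normGrad q := by ring
      _ = normGrad q := Real.div_sqrt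

theorem isGreatest_isoTV (w : EuclideanSpace ℝ (Fin n × Fin m)) :
    IsGreatest ((fun u => ⟪u, w⟫) '' (divergence '' unitFields n m)) (isoTV w) := by
  rw [image_image]
  exact ⟨exists_mem_unitFields_inner_divergence_eq_isoTV w,
    forall_mem_image.2 fun _ hp => inner_divergence_le_isoTV hp w⟩

theorem isMinOn_rofEnergy_isoTV_iff {lam : ℝ} (hlam : 0 < lam)
    {w₀ : EuclideanSpace ℝ (Fin n × Fin m)} {ξ : (Fin n × Fin m → ℝ) × (Fin n × Fin m → ℝ)}
    (hξ : ξ ∈ unitFields n m)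
    (hmin : ∀ p ∈ unitFields n m, ‖lam • divergence ξ - w₀‖ ≤ ‖lam • divergence p - w₀‖)
    (w : EuclideanSpace ℝ (Fin n × Fin m)) :
    IsMinOn (rofEnergy isoTV lam w₀) univ w ↔ w = w₀ - lam • divergence ξ :=
  isMinOn_rofEnergy_iff (fun w => (isGreatest_isoTV w).isLUB)
    ((convex_unitFields n m).linear_image divergence) hlam (mem_image_of_mem _ hξ)
    (forall_mem_image.2 hmin) w

theorem rofEnergy_isoTV (lam : ℝ) (w₀ w : EuclideanSpace ℝ (Fin n × Fin m)) :
    rofEnergy isoTV lam w₀ w = (∑ q, √(gradX w.ofLp q ^ 2 + gradY w.ofLp q ^ 2))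
      + (1 / (2 * lam)) * ∑ q, (w.ofLp q - w₀.ofLp q) ^ 2 := by
  rw [rofEnergy, EuclideanSpace.real_norm_sq_eq]
  rfl

theorem norm_smul_divergence_sub_sq (lam : ℝ) (p : (Fin n × Fin m → ℝ) × (Fin n × Fin m → ℝ))
    (w₀ : EuclideanSpace ℝ (Fin n × Fin m)) :
    ‖lam • divergence p - w₀‖ ^ 2 = ∑ q, (lam * divv p.1 p.2 q - w₀.ofLp q) ^ 2 :=
  EuclideanSpace.real_norm_sq_eq _

end Grid

/-- Chambolle's projection characterization of the isotropic ROF minimizer. -/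
theorem isoROF_solution_via_projection (n m : ℕ) (hn : 1 ≤ n) (hm : 1 ≤ m)
    (lam : ℝ) (hlam : 0 < lam)
    (w₀ : Fin n × Fin m → ℝ)
    (ξx ξy : Fin n × Fin m → ℝ)
    (hξ : ∀ q, (ξx q) ^ 2 + (ξy q) ^ 2 ≤ 1)
    (hmin : ∀ px py : Fin n × Fin m → ℝ, (∀ q, (px q) ^ 2 + (py q) ^ 2 ≤ 1) →
      ∑ q : Fin n × Fin m, (lam * divv ξx ξy q - w₀ q) ^ 2 ≤
        ∑ q : Fin n × Fin m, (lam * divv px py q - w₀ q) ^ 2) :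
    (∀ w : Fin n × Fin m → ℝ,
      (∑ q : Fin n × Fin m,
          Real.sqrt ((gradX (fun r => w₀ r - lam * divv ξx ξy r) q) ^ 2 +
            (gradY (fun r => w₀ r - lam * divv ξx ξy r) q) ^ 2)) +
        (1 / (2 * lam)) * ∑ q : Fin n × Fin m,
          ((w₀ q - lam * divv ξx ξy q) - w₀ q) ^ 2 ≤
      (∑ q : Fin n × Fin m, Real.sqrt ((gradX w q) ^ 2 + (gradY w q) ^ 2)) +
        (1 / (2 * lam)) * ∑ q : Fin n × Fin m, (w q - w₀ q) ^ 2) ∧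
    (∀ w : Fin n × Fin m → ℝ,
      (∀ w' : Fin n × Fin m → ℝ,
        (∑ q : Fin n × Fin m, Real.sqrt ((gradX w q) ^ 2 + (gradY w q) ^ 2)) +
            (1 / (2 * lam)) * ∑ q : Fin n × Fin m, (w q - w₀ q) ^ 2 ≤
          (∑ q : Fin n × Fin m, Real.sqrt ((gradX w' q) ^ 2 + (gradY w' q) ^ 2)) +
            (1 / (2 * lam)) * ∑ q : Fin n × Fin m, (w' q - w₀ q) ^ 2) →
      w = fun q => w₀ q - lam * divv ξx ξy q) := by
  have hproj : ∀ p ∈ unitFields n m, ‖lam • divergence (ξx, ξy) - WithLp.toLp 2 w₀‖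
      ≤ ‖lam • divergence p - WithLp.toLp 2 w₀‖ := fun p hp =>
    le_of_sq_le_sq (by simpa only [norm_smul_divergence_sub_sq] using hmin p.1 p.2 hp)
      (norm_nonneg _)
  have hiff := isMinOn_rofEnergy_isoTV_iff hlam (ξ := (ξx, ξy)) hξ hproj
  refine ⟨fun w => ?_, fun w hw => ?_⟩
  · have hle := isMinOn_univ_iff.1
      ((hiff (WithLp.toLp 2 fun q => w₀ q - lam * divv ξx ξy q)).2 rfl) (WithLp.toLp 2 w)
    simpa only [rofEnergy_isoTV] using hle
  · have hw_min : IsMinOn (rofEnergy isoTV lam (WithLp.toLp 2 w₀)) univ (WithLp.toLp 2 w) :=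
      isMinOn_univ_iff.2 fun w' => by
        simpa only [rofEnergy_isoTV] using hw w'.ofLp
    exact congrArg WithLp.ofLp ((hiff _).1 hw_min)
end

section
/- Let n, m ≥ 1. For every vector field p = (pˣ, pʸ) of functions Fin n × Fin m → ℝ, the discrete divergence satisfies the operator-norm bound ‖div p‖² ≤ 8·(‖pˣ‖² + ‖pʸ‖²), where div p is the negative adjoint of the gradient (∇ˣ, ∇ʸ). -/
/-!
The divergence of an image splits into one-dimensional divergences along the two axes. On a path,
each edge flux enters the divergence once as outflow and once as inflow, so
`(a - b)² ≤ 2 (a² + b²)` bounds the squared norm of the one-dimensional divergence by `4` times that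
of the flux; `(a + b)² ≤ 2 (a² + b²)` then combines the two axes at the cost of another factor `2`.
-/

/-- The discrete divergence on a path: it maps fluxes on the `k` edges to values on the `k + 1`
vertices and is the negative adjoint of the forward difference `w ↦ fun i => w (i + 1) - w i`.
The two padding zeros encode the vanishing flux through the ends of the path.
A flux indexed by vertices, as in `divv`, has a last entry lying on no edge; precomposing with
`Fin.castSucc` drops it. -/
def pathDiv {M : Type*} [AddGroup M] {k : ℕ} (f : Fin k → M) (i : Fin (k + 1)) : M :=
  Fin.snoc (α := fun _ => M) f 0 i - Fin.cons (α := fun _ => M) 0 f i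

theorem pathDiv_comp_castSucc_apply {M : Type*} [AddGroup M] {k : ℕ} (f : Fin (k + 1) → M)
    (i : Fin (k + 1)) :
    pathDiv (f ∘ Fin.castSucc) i =
      (if (i : ℕ) + 1 < k + 1 then f i else 0) -
        (if 0 < (i : ℕ) then f ⟨i - 1, (Nat.sub_le _ _).trans_lt i.isLt⟩ else 0) := by
  have outflow : Fin.snoc (α := fun _ => M) (f ∘ Fin.castSucc) 0 i =
      if (i : ℕ) + 1 < k + 1 then f i else 0 := by
    cases i using Fin.lastCases <;> simp
  have inflow : Fin.cons (α := fun _ => M) 0 (f ∘ Fin.castSucc) i =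
      if 0 < (i : ℕ) then f ⟨i - 1, (Nat.sub_le _ _).trans_lt i.isLt⟩ else 0 := by
    cases i using Fin.cases with
    | zero => simp
    | succ j => rfl
  rw [pathDiv, outflow, inflow]

section OrderedRing

variable {R : Type*} [Ring R] [LinearOrder R] [IsStrictOrderedRing R] {k : ℕ}

theorem sub_sq_le_two_mul (a b : R) : (a - b) ^ 2 ≤ 2 * (a ^ 2 + b ^ 2) := by
  simpa only [sub_eq_add_neg, neg_sq] using add_sq_le (a := a) (b := -b)

theorem sum_sq_pathDiv_le (f : Fin k → R) : ∑ i, pathDiv f i ^ 2 ≤ 4 * ∑ i, f i ^ 2 := by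
  have sum_sq_snoc : ∑ i, Fin.snoc (α := fun _ => R) f 0 i ^ 2 = ∑ i, f i ^ 2 := by
    simp [Fin.sum_univ_castSucc]
  have sum_sq_cons : ∑ i, Fin.cons (α := fun _ => R) 0 f i ^ 2 = ∑ i, f i ^ 2 := by
    simp [Fin.sum_univ_succ]
  calc ∑ i, pathDiv f i ^ 2
      ≤ ∑ i, 2 * (Fin.snoc (α := fun _ => R) f 0 i ^ 2 + Fin.cons (α := fun _ => R) 0 f i ^ 2) :=
        Finset.sum_le_sum fun _ _ => sub_sq_le_two_mul _ _
    _ = 2 * (∑ i, f i ^ 2 + ∑ i, f i ^ 2) := by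
        rw [← Finset.mul_sum, Finset.sum_add_distrib, sum_sq_snoc, sum_sq_cons]
    _ = 4 * ∑ i, f i ^ 2 := by noncomm_ring

theorem sum_sq_pathDiv_comp_castSucc_le (f : Fin (k + 1) → R) :
    ∑ i, pathDiv (f ∘ Fin.castSucc) i ^ 2 ≤ 4 * ∑ i, f i ^ 2 :=
  calc ∑ i, pathDiv (f ∘ Fin.castSucc) i ^ 2
      ≤ 4 * ∑ i : Fin k, f i.castSucc ^ 2 := sum_sq_pathDiv_le _
    _ ≤ 4 * ∑ i, f i ^ 2 := by
        rw [Fin.sum_univ_castSucc (fun i => f i ^ 2)]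
        gcongr
        exact le_add_of_nonneg_right (sq_nonneg _)

end OrderedRing

theorem divv_eq_pathDiv_add_pathDiv {k l : ℕ} (px py : Fin (k + 1) × Fin (l + 1) → ℝ)
    (q : Fin (k + 1) × Fin (l + 1)) :
    divv px py q =
      pathDiv ((fun i => px (i, q.2)) ∘ Fin.castSucc) q.1 +
        pathDiv ((fun j => py (q.1, j)) ∘ Fin.castSucc) q.2 := by
  rw [pathDiv_comp_castSucc_apply, pathDiv_comp_castSucc_apply]
  exact add_sub_assoc _ _ _

/-- The operator-norm bound for the discrete divergence: `‖div p‖² ≤ 8(‖pˣ‖² + ‖pʸ‖²)`. -/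
theorem divv_norm_sq_le (n m : ℕ) (hn : 1 ≤ n) (hm : 1 ≤ m)
    (px py : Fin n × Fin m → ℝ) :
    ∑ q : Fin n × Fin m, (divv px py q) ^ 2 ≤
      8 * ((∑ q : Fin n × Fin m, (px q) ^ 2) + ∑ q : Fin n × Fin m, (py q) ^ 2) := by
  obtain ⟨k, rfl⟩ := Nat.exists_eq_add_of_le' hn
  obtain ⟨l, rfl⟩ := Nat.exists_eq_add_of_le' hm
  let divx (q : Fin (k + 1) × Fin (l + 1)) := pathDiv ((fun i => px (i, q.2)) ∘ Fin.castSucc) q.1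
  let divy (q : Fin (k + 1) × Fin (l + 1)) := pathDiv ((fun j => py (q.1, j)) ∘ Fin.castSucc) q.2
  have sum_sq_divx_le : ∑ q, divx q ^ 2 ≤ 4 * ∑ q, px q ^ 2 := by
    rw [Fintype.sum_prod_type_right, Fintype.sum_prod_type_right, Finset.mul_sum]
    exact Finset.sum_le_sum fun j _ => sum_sq_pathDiv_comp_castSucc_le fun i => px (i, j)
  have sum_sq_divy_le : ∑ q, divy q ^ 2 ≤ 4 * ∑ q, py q ^ 2 := by
    rw [Fintype.sum_prod_type, Fintype.sum_prod_type, Finset.mul_sum]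
    exact Finset.sum_le_sum fun i _ => sum_sq_pathDiv_comp_castSucc_le fun j => py (i, j)
  calc ∑ q, divv px py q ^ 2
      = ∑ q, (divx q + divy q) ^ 2 := by simp only [divv_eq_pathDiv_add_pathDiv, divx, divy]
    _ ≤ ∑ q, 2 * (divx q ^ 2 + divy q ^ 2) := Finset.sum_le_sum fun _ _ => add_sq_le
    _ = 2 * (∑ q, divx q ^ 2 + ∑ q, divy q ^ 2) := by
        rw [← Finset.mul_sum, Finset.sum_add_distrib]
    _ ≤ 8 * (∑ q, px q ^ 2 + ∑ q, py q ^ 2) := by linarith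
end
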